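/- For every integer m ≥ 0, ∫_0^1 ( m·(x − x²)^m + x·(x − x²)^m/(1 − x + x²) ) dx = π/(3√3) + m / ( (m+1)·C(2m+1, m) ) − Σ_{j=0}^{m−1} 1 / ( (j+1)·C(2j+2, j+1) ), where C(n,k) denotes the binomial coefficient (and the empty sum for m = 0 is 0). -/

import Mathlib

open intervalIntegral Real

/-
Put `y = x - x ^ 2`, so that the denominator `1 - x + x ^ 2` is `1 - y`. The finite geometric sum
`y ^ m / (1 - y) = 1 / (1 - y) - ∑ j < m, y ^ j` reduces the rational part of the integral to
`∫ x / (1 - y)`, which is an arctangent integral after the reflection `x ↦ 1 - x`, minus the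
integrals of `x * y ^ j = x ^ (j + 1) * (1 - x) ^ j`. These, like that of
`y ^ m = x ^ m * (1 - x) ^ m`, are Beta integrals with integer parameters, hence reciprocals of
multiples of binomial coefficients.
-/

open MeasureTheory (volume)
open scoped Interval

theorem integral_pow_mul_one_sub_pow (a b : ℕ) :
    ∫ x in (0 : ℝ)..1, x ^ a * (1 - x) ^ b
      = (a.factorial * b.factorial : ℝ) / (a + b + 1).factorial := by
  have hbeta : ((∫ x in (0 : ℝ)..1, x ^ a * (1 - x) ^ b : ℝ) : ℂ)
      = Complex.betaIntegral (a + 1) (b + 1) := by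
    simp [Complex.betaIntegral, ← integral_ofReal]
  have hre (n : ℕ) : 0 < ((n : ℂ) + 1).re := by
    rw [Complex.add_re, Complex.natCast_re, Complex.one_re]
    positivity
  have hsum : (a + 1 + (b + 1) : ℂ) = ((a + b + 1 : ℕ) : ℂ) + 1 := by
    push_cast
    ring
  rw [Complex.betaIntegral_eq_Gamma_mul_div _ _ (hre a) (hre b), hsum,
    Complex.Gamma_nat_eq_factorial, Complex.Gamma_nat_eq_factorial,
    Complex.Gamma_nat_eq_factorial] at hbeta
  apply Complex.ofReal_injective
  simp [hbeta]

theorem integral_pow_mul_one_sub_pow_eq_one_div_choose (a b : ℕ) :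
    ∫ x in (0 : ℝ)..1, x ^ a * (1 - x) ^ b = 1 / ((b + 1) * ((a + b + 1).choose a : ℝ)) := by
  rw [integral_pow_mul_one_sub_pow, add_assoc a b 1, Nat.cast_add_choose, Nat.factorial_succ b]
  push_cast
  field_simp

theorem integral_sub_sq_pow (m : ℕ) :
    ∫ x in (0 : ℝ)..1, (x - x ^ 2) ^ m = 1 / ((m + 1) * ((2 * m + 1).choose m : ℝ)) := by
  rw [two_mul, ← integral_pow_mul_one_sub_pow_eq_one_div_choose]
  congr with x
  rw [← mul_pow]
  ring

theorem integral_id_mul_sub_sq_pow (m : ℕ) :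
    ∫ x in (0 : ℝ)..1, x * (x - x ^ 2) ^ m
      = 1 / ((m + 1) * ((2 * m + 2).choose (m + 1) : ℝ)) := by
  rw [show 2 * m + 2 = m + 1 + m + 1 by ring, ← integral_pow_mul_one_sub_pow_eq_one_div_choose]
  congr with x
  rw [pow_succ' x m, mul_assoc, ← mul_pow]
  ring

theorem integral_id_mul_of_reflect {a b : ℝ} {f : ℝ → ℝ} (hf : IntervalIntegrable f volume a b)
    (hsymm : ∀ x ∈ [[a, b]], f (a + b - x) = f x) :
    ∫ x in a..b, x * f x = (a + b) / 2 * ∫ x in a..b, f x := by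
  have hreflect : ∫ x in a..b, x * f x = (a + b) * (∫ x in a..b, f x) - ∫ x in a..b, x * f x :=
    calc
      ∫ x in a..b, x * f x = ∫ x in a..b, (a + b - x) * f (a + b - x) := by
        rw [integral_comp_sub_left (fun x ↦ x * f x), add_sub_cancel_right, add_sub_cancel_left]
      _ = ∫ x in a..b, ((a + b) * f x - x * f x) :=
        integral_congr fun x hx ↦ by simp only [hsymm x hx, sub_mul]
      _ = _ := by
        rw [integral_sub (hf.const_mul _) (hf.continuousOn_mul (by fun_prop)),
          integral_const_mul]
  linarith

theorem one_sub_add_sq_pos {R : Type*} [CommRing R] [LinearOrder R] [IsStrictOrderedRing R]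
    (x : R) : 0 < 1 - x + x ^ 2 := by
  nlinarith [sq_nonneg (2 * x - 1)]

theorem integral_inv_one_sub_add_sq :
    ∫ x in (0 : ℝ)..1, (1 - x + x ^ 2)⁻¹ = 2 * π / (3 * √3) := by
  have hsquare (x : ℝ) : 1 - x + x ^ 2 = (√3 / 2) ^ 2 + (x - 1 / 2) ^ 2 := by
    rw [div_pow, sq_sqrt (by norm_num)]
    ring
  have hright : (1 - 1 / 2) / (√3 / 2) = (√3)⁻¹ := by
    field_simp
    norm_num
  have hleft : (0 - 1 / 2) / (√3 / 2) = -(√3)⁻¹ := by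
    field_simp
    norm_num
  simp only [hsquare]
  rw [integral_comp_sub_right fun x ↦ ((√3 / 2) ^ 2 + x ^ 2)⁻¹,
    integral_inv_sq_add_sq (by positivity), hright, hleft, arctan_neg, arctan_inv_sqrt_three]
  field_simp
  norm_num

theorem integral_id_div_one_sub_add_sq :
    ∫ x in (0 : ℝ)..1, x / (1 - x + x ^ 2) = π / (3 * √3) := by
  have hint : IntervalIntegrable (fun x : ℝ ↦ (1 - x + x ^ 2)⁻¹) volume 0 1 :=
    Continuous.intervalIntegrable
      (Continuous.inv₀ (by fun_prop) fun x ↦ (one_sub_add_sq_pos x).ne') _ _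
  have hsymm (x : ℝ) : (1 - (0 + 1 - x) + (0 + 1 - x) ^ 2)⁻¹ = (1 - x + x ^ 2)⁻¹ := by
    congr 1
    ring
  simp only [div_eq_mul_inv (_ : ℝ) (1 - _ + _)]
  rw [integral_id_mul_of_reflect hint fun x _ ↦ hsymm x, integral_inv_one_sub_add_sq]
  ring

theorem pow_div_one_sub_eq_sub_geom_sum {K : Type*} [DivisionRing K] {y : K} (hy : y ≠ 1) (m : ℕ) :
    y ^ m / (1 - y) = 1 / (1 - y) - ∑ j ∈ Finset.range m, y ^ j := by
  have : 1 - y ≠ 0 := sub_ne_zero.mpr hy.symm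
  rw [div_eq_iff this, sub_mul, div_mul_cancel₀ _ this, geom_sum_mul_neg, sub_sub_cancel]

theorem integral_mul_pow_div_one_sub {a b : ℝ} {w y : ℝ → ℝ}
    (hw : IntervalIntegrable w volume a b) (hy : ContinuousOn y [[a, b]])
    (hy1 : ∀ x ∈ [[a, b]], y x ≠ 1) (m : ℕ) :
    ∫ x in a..b, w x * y x ^ m / (1 - y x)
      = (∫ x in a..b, w x / (1 - y x)) - ∑ j ∈ Finset.range m, ∫ x in a..b, w x * y x ^ j := by
  have hdiv : IntervalIntegrable (fun x ↦ w x / (1 - y x)) volume a b := by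
    simp only [div_eq_mul_inv]
    exact hw.mul_continuousOn <|
      (continuousOn_const.sub hy).inv₀ fun x hx ↦ sub_ne_zero.mpr (hy1 x hx).symm
  have hpow (j : ℕ) : IntervalIntegrable (fun x ↦ w x * y x ^ j) volume a b :=
    hw.mul_continuousOn (hy.pow j)
  have hsum : IntervalIntegrable (fun x ↦ ∑ j ∈ Finset.range m, w x * y x ^ j) volume a b := by
    simpa only [Finset.sum_fn] using IntervalIntegrable.sum _ fun j _ ↦ hpow j
  rw [← integral_finsetSum fun j _ ↦ hpow j, ← integral_sub hdiv hsum]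
  refine integral_congr fun x hx ↦ ?_
  simp only [mul_div_assoc, pow_div_one_sub_eq_sub_geom_sum (hy1 x hx), mul_sub, Finset.mul_sum,
    mul_one_div]

theorem integral_id_mul_sub_sq_pow_div (m : ℕ) :
    ∫ x in (0 : ℝ)..1, x * (x - x ^ 2) ^ m / (1 - x + x ^ 2)
      = π / (3 * √3)
        - ∑ j ∈ Finset.range m, 1 / (((j : ℝ) + 1) * ((2 * j + 2).choose (j + 1) : ℝ)) := by
  have hden (x : ℝ) : 1 - x + x ^ 2 = 1 - (x - x ^ 2) := by ring
  have hne (x : ℝ) : x - x ^ 2 ≠ 1 := by linarith [one_sub_add_sq_pos x]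
  simp only [← integral_id_div_one_sub_add_sq, ← integral_id_mul_sub_sq_pow, hden]
  exact integral_mul_pow_div_one_sub intervalIntegrable_id (by fun_prop) (fun x _ ↦ hne x) m

/-- For every integer `m ≥ 0`,
`∫_0^1 (m (x−x²)^m + x (x−x²)^m/(1−x+x²)) dx
  = π/(3√3) + m/((m+1) C(2m+1,m)) − Σ_{j=0}^{m−1} 1/((j+1) C(2j+2,j+1))`. -/
theorem stmt13 (m : ℕ) :
    (∫ x in (0 : ℝ)..1,
        ((m : ℝ) * (x - x ^ 2) ^ m + x * (x - x ^ 2) ^ m / (1 - x + x ^ 2)))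
      = π / (3 * Real.sqrt 3)
        + (m : ℝ) / ((m + 1) * (Nat.choose (2 * m + 1) m : ℝ))
        - ∑ j ∈ Finset.range m, 1 / (((j : ℝ) + 1) * (Nat.choose (2 * j + 2) (j + 1) : ℝ)) := by
  have hpow : IntervalIntegrable (fun x : ℝ ↦ (m : ℝ) * (x - x ^ 2) ^ m) volume 0 1 :=
    Continuous.intervalIntegrable (by fun_prop) _ _
  have hdiv : IntervalIntegrable (fun x : ℝ ↦ x * (x - x ^ 2) ^ m / (1 - x + x ^ 2)) volume 0 1 :=
    Continuous.intervalIntegrable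
      (Continuous.div₀ (by fun_prop) (by fun_prop) fun x ↦ (one_sub_add_sq_pos x).ne') _ _
  rw [integral_add hpow hdiv, integral_const_mul, integral_sub_sq_pow,
    integral_id_mul_sub_sq_pow_div, mul_one_div]
  ring
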